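/- Let C be a connected strongly graded k-coalgebra and let (X, ρ) be a graded right C-comodule such that X_i = 0 for all i < n. Then X is strongly graded in degree n (i.e., ρ_{n,q} : X_{n+q} → X_n ⊗ C_q is injective for all q ≥ 0) if and only if ρ_{i,1} : X_{i+1} → X_i ⊗ C₁ is injective for all i ≥ n. -/

import Mathlib

/-!
Write `ρ_{p,q}` and `Δ_{p,q}` for the components of the coaction and the comultiplication. The
tridegree `(p, q, r)` part of coassociativity is
`(ρ_{p,q} ⊗ id) ∘ ρ_{p+q,r} = (id ⊗ Δ_{q,r}) ∘ ρ_{p,q+r}`, and tensoring with a flat module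
preserves injectivity. Take `p = n` and `r = 1`. If all `ρ_{n,q}` are injective, then so is the
right-hand side, as `C` is strongly graded, and hence `ρ_{n+q,1}` is injective. Conversely, if all
`ρ_{i,1}` with `i ≥ n` are injective, then injectivity of `ρ_{n,q}` passes to the left-hand side
and hence to `ρ_{n,q+1}`; the induction starts at `ρ_{n,0}`, which the counit law makes injective.
-/

open TensorProduct

noncomputable section
namespace Koszul

variable (k : Type) [Field k]
variable (C : Type) [AddCommGroup C] [Module k C] [Coalgebra k C]
variable (𝒞 : ℕ → Submodule k C)

/-- The data exhibiting `C = ⊕ₙ Cₙ` as a connected graded coalgebra: a grouplike element `g`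
spanning `C₀`, the counit vanishing in positive degrees, and the components
`Δc p q : C_{p+q} → C_p ⊗ C_q` of the comultiplication (extended by `0` to the other
homogeneous components of `C`). -/
structure GradedCoalgebraData where
  g : C
  Δc : ∀ p q : ℕ, C →ₗ[k] (↥(𝒞 p) ⊗[k] ↥(𝒞 q))
  hC0 : 𝒞 0 = Submodule.span k {g}
  hgrp : Coalgebra.comul (R := k) g = g ⊗ₜ[k] g
  hcu : Coalgebra.counit (R := k) g = 1
  hcounit : ∀ n, 1 ≤ n → ∀ x ∈ 𝒞 n, Coalgebra.counit (R := k) x = 0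
  hΔc : ∀ n, ∀ x ∈ 𝒞 n, Coalgebra.comul (R := k) x =
    ∑ p ∈ Finset.range (n+1),
      (TensorProduct.map (𝒞 p).subtype (𝒞 (n-p)).subtype) (Δc p (n-p) x)
  hΔc0 : ∀ p q n, n ≠ p + q → ∀ x ∈ 𝒞 n, Δc p q x = 0

/-- `C` is strongly graded: every component `Δ_{p,q} : C_{p+q} → C_p ⊗ C_q` is injective. -/
def GradedCoalgebraData.Strong (D : GradedCoalgebraData k C 𝒞) : Prop :=
  ∀ p q : ℕ, ∀ x ∈ 𝒞 (p + q), D.Δc p q x = 0 → x = 0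

/-- The data of a graded right `C`-comodule structure on `X = ⊕ₙ Xₙ`: a counital and
coassociative coaction `ρ` together with its components `ρc p q : X_{p+q} → X_p ⊗ C_q`
(extended by `0` to the other homogeneous components of `X`). -/
structure GradedComoduleData (X : Type) [AddCommGroup X] [Module k X]
    (𝒳 : ℕ → Submodule k X) where
  ρ : X →ₗ[k] X ⊗[k] C
  ρc : ∀ p q : ℕ, X →ₗ[k] (↥(𝒳 p) ⊗[k] ↥(𝒞 q))
  coassoc : ∀ x, (LinearMap.rTensor C ρ) (ρ x) =
    (TensorProduct.assoc k X C C).symm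
      ((LinearMap.lTensor X (Coalgebra.comul (R := k))) (ρ x))
  counit_law : ∀ x,
    (TensorProduct.rid k X) ((LinearMap.lTensor X (Coalgebra.counit (R := k))) (ρ x)) = x
  hρc : ∀ n, ∀ x ∈ 𝒳 n, ρ x =
    ∑ p ∈ Finset.range (n+1),
      (TensorProduct.map (𝒳 p).subtype (𝒞 (n-p)).subtype) (ρc p (n-p) x)
  hρc0 : ∀ p q n, n ≠ p + q → ∀ x ∈ 𝒳 n, ρc p q x = 0

section Components

variable {ι R M A B : Type*} [DecidableEq ι] [CommSemiring R]
  [AddCommMonoid M] [Module R M] [AddCommMonoid A] [Module R A] [AddCommMonoid B] [Module R B]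

/-- The projection of a graded module onto its homogeneous component of degree `i`, as a linear
map with values in that component. -/
def homogeneousProj (ℳ : ι → Submodule R M) [DirectSum.Decomposition ℳ] (i : ι) : M →ₗ[R] ℳ i :=
  DirectSum.component R ι (fun j => ℳ j) i ∘ₗ DirectSum.decomposeLinearEquiv ℳ

/-- The component `f_{p,q}` of a linear map `f : M → A ⊗ B` into a tensor product of graded
modules. It is defined on all of `M`, so that no identification of `M_{(p+q)+r}` with `M_{p+(q+r)}`
is needed. -/
def component (𝒜 : ι → Submodule R A) (ℬ : ι → Submodule R B) [DirectSum.Decomposition 𝒜]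
    [DirectSum.Decomposition ℬ] (p q : ι) (f : M →ₗ[R] A ⊗[R] B) : M →ₗ[R] 𝒜 p ⊗[R] ℬ q :=
  TensorProduct.map (homogeneousProj 𝒜 p) (homogeneousProj ℬ q) ∘ₗ f

/-- A linear map `f : M → A ⊗ B` is graded if `f(M_n) ⊆ ∑_{p+q=n} A_p ⊗ B_q` for all `n`,
expressed as the vanishing on `M_n` of the components of `f` in all other bidegrees. -/
def IsGradedMap [Add ι] (ℳ : ι → Submodule R M) (𝒜 : ι → Submodule R A) (ℬ : ι → Submodule R B)
    [DirectSum.Decomposition 𝒜] [DirectSum.Decomposition ℬ] (f : M →ₗ[R] A ⊗[R] B) : Prop :=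
  ∀ p q n, n ≠ p + q → ∀ x ∈ ℳ n, component 𝒜 ℬ p q f x = 0

section

variable (ℳ : ι → Submodule R M) [DirectSum.Decomposition ℳ]

lemma homogeneousProj_apply (i : ι) (x : M) : homogeneousProj ℳ i x = DirectSum.decompose ℳ x i :=
  rfl

lemma homogeneousProj_comp_subtype_self (i : ι) :
    homogeneousProj ℳ i ∘ₗ (ℳ i).subtype = LinearMap.id := by
  ext x
  simp [homogeneousProj_apply]

lemma homogeneousProj_comp_subtype_of_ne {i j : ι} (h : j ≠ i) :
    homogeneousProj ℳ i ∘ₗ (ℳ j).subtype = 0 := by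
  ext x
  simpa [homogeneousProj_apply] using DirectSum.decompose_of_mem_ne ℳ x.2 h

lemma injOn_homogeneousProj (i : ι) : Set.InjOn (homogeneousProj ℳ i) (ℳ i) :=
  Set.injOn_iff_injective.2 <| Function.LeftInverse.injective (g := id) <|
    LinearMap.congr_fun (homogeneousProj_comp_subtype_self ℳ i)

lemma domRestrict_comp_homogeneousProj {f : M →ₗ[R] A} {i : ι}
    (h : ∀ j ≠ i, ∀ x ∈ ℳ j, f x = 0) :
    f.domRestrict (ℳ i) ∘ₗ homogeneousProj ℳ i = f := by
  refine DirectSum.decompose_lhom_ext ℳ fun j => LinearMap.ext fun ⟨x, hx⟩ => ?_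
  rcases eq_or_ne j i with rfl | hj
  · simp [homogeneousProj_apply, DirectSum.decompose_of_mem_same ℳ hx]
  · simp [homogeneousProj_apply, DirectSum.decompose_of_mem_ne ℳ hx hj, h j hj x hx]

end

section

variable {𝒜 : ι → Submodule R A} {ℬ : ι → Submodule R B} [DirectSum.Decomposition 𝒜]
  [DirectSum.Decomposition ℬ]

lemma component_map_subtype_self (p q : ι) :
    component 𝒜 ℬ p q (TensorProduct.map (𝒜 p).subtype (ℬ q).subtype) = LinearMap.id := by
  rw [component, ← TensorProduct.map_comp, homogeneousProj_comp_subtype_self,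
    homogeneousProj_comp_subtype_self, TensorProduct.map_id]

lemma component_map_subtype_of_ne {a b p q : ι} (h : (a, b) ≠ (p, q)) :
    component 𝒜 ℬ p q (TensorProduct.map (𝒜 a).subtype (ℬ b).subtype) = 0 := by
  rw [component, ← TensorProduct.map_comp]
  rcases eq_or_ne a p with rfl | ha
  · rw [homogeneousProj_comp_subtype_of_ne ℬ (by simpa using h), TensorProduct.map_zero_right]
  · rw [homogeneousProj_comp_subtype_of_ne 𝒜 ha, TensorProduct.map_zero_left]

end

end Components

lemma component_eq_of_eq_sum {R A B M : Type*} [CommSemiring R]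
    [AddCommMonoid A] [Module R A] [AddCommMonoid B] [Module R B] [AddCommMonoid M] [Module R M]
    {𝒜 : ℕ → Submodule R A} [DirectSum.Decomposition 𝒜]
    {ℬ : ℕ → Submodule R B} [DirectSum.Decomposition ℬ]
    {ℳ : ℕ → Submodule R M} [DirectSum.Decomposition ℳ]
    {f : M →ₗ[R] A ⊗[R] B} {fc : ∀ p q, M →ₗ[R] 𝒜 p ⊗[R] ℬ q}
    (hf : ∀ n, ∀ x ∈ ℳ n, f x = ∑ p ∈ Finset.range (n + 1),
      TensorProduct.map (𝒜 p).subtype (ℬ (n - p)).subtype (fc p (n - p) x))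
    (hfc : ∀ p q n, n ≠ p + q → ∀ x ∈ ℳ n, fc p q x = 0) (p q : ℕ) :
    component 𝒜 ℬ p q f = fc p q := by
  refine DirectSum.decompose_lhom_ext ℳ fun n => LinearMap.ext fun ⟨x, hx⟩ => ?_
  have hsum : component 𝒜 ℬ p q f x = ∑ a ∈ Finset.range (n + 1),
      component 𝒜 ℬ p q (TensorProduct.map (𝒜 a).subtype (ℬ (n - a)).subtype)
        (fc a (n - a) x) := by
    simp only [component, LinearMap.comp_apply, hf n x hx, map_sum]
  simp only [LinearMap.comp_apply, Submodule.subtype_apply, hsum]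
  rcases eq_or_ne n (p + q) with rfl | hn
  · rw [Finset.sum_eq_single p]
    · rw [Nat.add_sub_cancel_left, component_map_subtype_self, LinearMap.id_apply]
    · intro a _ ha
      rw [component_map_subtype_of_ne (by simp [ha]), LinearMap.zero_apply]
    · simp
  · rw [hfc p q n hn x hx]
    refine Finset.sum_eq_zero fun a ha => ?_
    have hbidegree : (a, n - a) ≠ (p, q) := by
      rw [Finset.mem_range] at ha
      grind
    rw [component_map_subtype_of_ne hbidegree, LinearMap.zero_apply]

section Coaction

variable {ι R A M : Type*} [DecidableEq ι] [CommSemiring R]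
  [AddCommMonoid A] [Module R A] [CoalgebraStruct R A] [AddCommMonoid M] [Module R M]
  {𝒜 : ι → Submodule R A} [DirectSum.Decomposition 𝒜]
  {ℳ : ι → Submodule R M} [DirectSum.Decomposition ℳ]
  {ρ : M →ₗ[R] M ⊗[R] A}

open Coalgebra (comul counit)

section Coassociative

variable [AddSemigroup ι]

lemma rTensor_component_comp_component (hρ : IsGradedMap ℳ ℳ 𝒜 ρ)
    (hΔ : IsGradedMap 𝒜 𝒜 𝒜 (comul (R := R)))
    (hcoassoc : ρ.rTensor A ∘ₗ ρ =
      (TensorProduct.assoc R M A A).symm ∘ₗ (comul (R := R)).lTensor M ∘ₗ ρ) (p q r : ι) :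
    ((component ℳ 𝒜 p q ρ).domRestrict (ℳ (p + q))).rTensor (𝒜 r) ∘ₗ
        component ℳ 𝒜 (p + q) r ρ =
      (TensorProduct.assoc R (ℳ p) (𝒜 q) (𝒜 r)).symm ∘ₗ
        ((component 𝒜 𝒜 q r (comul (R := R))).domRestrict (𝒜 (q + r))).lTensor (ℳ p) ∘ₗ
          component ℳ 𝒜 p (q + r) ρ := by
  let πM := homogeneousProj ℳ
  let πA := homogeneousProj 𝒜
  calc
    _ = TensorProduct.map (component ℳ 𝒜 p q ρ) (πA r) ∘ₗ ρ := by
      rw [component.eq_def _ _ (p + q), ← LinearMap.comp_assoc, LinearMap.rTensor_comp_map,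
        domRestrict_comp_homogeneousProj ℳ (hρ p q)]
    _ = TensorProduct.map (TensorProduct.map (πM p) (πA q)) (πA r) ∘ₗ ρ.rTensor A ∘ₗ ρ := by
      rw [← LinearMap.comp_assoc, LinearMap.map_comp_rTensor, component]
    _ = (TensorProduct.assoc R (ℳ p) (𝒜 q) (𝒜 r)).symm ∘ₗ
          TensorProduct.map (πM p) (TensorProduct.map (πA q) (πA r)) ∘ₗ
            (comul (R := R)).lTensor M ∘ₗ ρ := by
      rw [hcoassoc, ← LinearMap.comp_assoc, TensorProduct.map_map_comp_assoc_symm_eq,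
        LinearMap.comp_assoc]
    _ = (TensorProduct.assoc R (ℳ p) (𝒜 q) (𝒜 r)).symm ∘ₗ
          TensorProduct.map (πM p) (component 𝒜 𝒜 q r (comul (R := R))) ∘ₗ ρ := by
      rw [← LinearMap.comp_assoc _ _ (TensorProduct.map _ _), LinearMap.map_comp_lTensor, component]
    _ = _ := by
      rw [component.eq_def ℳ, ← LinearMap.comp_assoc _ _ (LinearMap.lTensor _ _),
        LinearMap.lTensor_comp_map, domRestrict_comp_homogeneousProj 𝒜 (hΔ q r)]

lemma injOn_component_add_left (hρ : IsGradedMap ℳ ℳ 𝒜 ρ)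
    (hΔ : IsGradedMap 𝒜 𝒜 𝒜 (comul (R := R)))
    (hcoassoc : ρ.rTensor A ∘ₗ ρ =
      (TensorProduct.assoc R M A A).symm ∘ₗ (comul (R := R)).lTensor M ∘ₗ ρ)
    {p q r : ι} [Module.Flat R (ℳ p)]
    (hΔ_inj : Set.InjOn (component 𝒜 𝒜 q r (comul (R := R))) (𝒜 (q + r)))
    (hρ_inj : Set.InjOn (component ℳ 𝒜 p (q + r) ρ) (ℳ (p + (q + r)))) :
    Set.InjOn (component ℳ 𝒜 (p + q) r ρ) (ℳ (p + q + r)) := by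
  have hΔ_tensor := Module.Flat.lTensor_preserves_injective_linearMap (M := ℳ p)
    ((component 𝒜 𝒜 q r (comul (R := R))).domRestrict (𝒜 (q + r))) hΔ_inj.injective
  have hcomp := (TensorProduct.assoc R (ℳ p) (𝒜 q) (𝒜 r)).symm.injective.comp_injOn
    (hΔ_tensor.comp_injOn hρ_inj)
  rw [← LinearMap.coe_comp, ← LinearEquiv.coe_toLinearMap, ← LinearMap.coe_comp,
    ← rTensor_component_comp_component hρ hΔ hcoassoc, ← add_assoc, LinearMap.coe_comp] at hcomp
  exact hcomp.of_comp

lemma injOn_component_add_right (hρ : IsGradedMap ℳ ℳ 𝒜 ρ)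
    (hΔ : IsGradedMap 𝒜 𝒜 𝒜 (comul (R := R)))
    (hcoassoc : ρ.rTensor A ∘ₗ ρ =
      (TensorProduct.assoc R M A A).symm ∘ₗ (comul (R := R)).lTensor M ∘ₗ ρ)
    {p q r : ι} [Module.Flat R (𝒜 r)]
    (hpq : Set.InjOn (component ℳ 𝒜 p q ρ) (ℳ (p + q)))
    (hr : Set.InjOn (component ℳ 𝒜 (p + q) r ρ) (ℳ (p + q + r))) :
    Set.InjOn (component ℳ 𝒜 p (q + r) ρ) (ℳ (p + (q + r))) := by
  have hpq_tensor := Module.Flat.rTensor_preserves_injective_linearMap (M := 𝒜 r)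
    ((component ℳ 𝒜 p q ρ).domRestrict (ℳ (p + q))) hpq.injective
  have hcomp := hpq_tensor.comp_injOn hr
  rw [← LinearMap.coe_comp, rTensor_component_comp_component hρ hΔ hcoassoc, add_assoc,
    ← LinearMap.comp_assoc, LinearMap.coe_comp] at hcomp
  exact hcomp.of_comp

end Coassociative

lemma injOn_component_zero [Zero ι] (hε : ∀ i ≠ 0, ∀ a ∈ 𝒜 i, counit (R := R) a = 0)
    (hcounit : TensorProduct.rid R M ∘ₗ (counit (R := R)).lTensor M ∘ₗ ρ = LinearMap.id) (n : ι) :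
    Set.InjOn (component ℳ 𝒜 n 0 ρ) (ℳ n) := by
  have hrid : TensorProduct.rid R (ℳ n) ∘ₗ
      TensorProduct.map (homogeneousProj ℳ n) (counit (R := R) (A := A)) =
        homogeneousProj ℳ n ∘ₗ TensorProduct.rid R M ∘ₗ (counit (R := R)).lTensor M := by
    ext
    simp
  have hproj : TensorProduct.rid R (ℳ n) ∘ₗ
      ((counit (R := R)).domRestrict (𝒜 0)).lTensor (ℳ n) ∘ₗ component ℳ 𝒜 n 0 ρ =
        homogeneousProj ℳ n := by
    calc
      _ = TensorProduct.rid R (ℳ n) ∘ₗ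
            TensorProduct.map (homogeneousProj ℳ n) (counit (R := R)) ∘ₗ ρ := by
        rw [component, ← LinearMap.comp_assoc _ _ (LinearMap.lTensor _ _),
          LinearMap.lTensor_comp_map, domRestrict_comp_homogeneousProj 𝒜 hε]
      _ = homogeneousProj ℳ n ∘ₗ
            TensorProduct.rid R M ∘ₗ (counit (R := R)).lTensor M ∘ₗ ρ := by
        rw [← LinearMap.comp_assoc, hrid, LinearMap.comp_assoc, LinearMap.comp_assoc]
      _ = homogeneousProj ℳ n := by rw [hcounit, LinearMap.comp_id]
  have hinj := injOn_homogeneousProj ℳ n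
  rw [← hproj, ← LinearMap.comp_assoc, LinearMap.coe_comp] at hinj
  exact hinj.of_comp

end Coaction

open Coalgebra (comul counit) in
theorem statement11_general {R A M : Type*} [CommSemiring R]
    [AddCommMonoid A] [Module R A] [CoalgebraStruct R A] [AddCommMonoid M] [Module R M]
    {𝒜 : ℕ → Submodule R A} [DirectSum.Decomposition 𝒜]
    {ℳ : ℕ → Submodule R M} [DirectSum.Decomposition ℳ] {ρ : M →ₗ[R] M ⊗[R] A} {n : ℕ}
    [Module.Flat R (ℳ n)] [Module.Flat R (𝒜 1)]
    (hΔ : IsGradedMap 𝒜 𝒜 𝒜 (comul (R := R)))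
    (hε : ∀ i ≠ 0, ∀ a ∈ 𝒜 i, counit (R := R) a = 0)
    (hΔ_inj : ∀ q, Set.InjOn (component 𝒜 𝒜 q 1 (comul (R := R))) (𝒜 (q + 1)))
    (hρ : IsGradedMap ℳ ℳ 𝒜 ρ)
    (hcoassoc : ρ.rTensor A ∘ₗ ρ =
      (TensorProduct.assoc R M A A).symm ∘ₗ (comul (R := R)).lTensor M ∘ₗ ρ)
    (hcounit : TensorProduct.rid R M ∘ₗ (counit (R := R)).lTensor M ∘ₗ ρ = LinearMap.id) :
    (∀ q, Set.InjOn (component ℳ 𝒜 n q ρ) (ℳ (n + q))) ↔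
      ∀ i, n ≤ i → Set.InjOn (component ℳ 𝒜 i 1 ρ) (ℳ (i + 1)) := by
  constructor
  · intro h i hi
    obtain ⟨q, rfl⟩ := Nat.exists_eq_add_of_le hi
    exact injOn_component_add_left hρ hΔ hcoassoc (hΔ_inj q) (h (q + 1))
  · intro h q
    induction q with
    | zero => exact injOn_component_zero hε hcounit n
    | succ q ih =>
      exact injOn_component_add_right hρ hΔ hcoassoc ih (h (n + q) (Nat.le_add_right n q))

section Data

variable {k C 𝒞}

lemma GradedCoalgebraData.counit_eq_zero (D : GradedCoalgebraData k C 𝒞) (i : ℕ) (hi : i ≠ 0)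
    (c : C) (hc : c ∈ 𝒞 i) : Coalgebra.counit (R := k) c = 0 :=
  D.hcounit i (Nat.one_le_iff_ne_zero.2 hi) c hc

variable [DirectSum.Decomposition 𝒞]

lemma GradedCoalgebraData.component_comul (D : GradedCoalgebraData k C 𝒞) (p q : ℕ) :
    component 𝒞 𝒞 p q (Coalgebra.comul (R := k)) = D.Δc p q :=
  component_eq_of_eq_sum D.hΔc D.hΔc0 p q

lemma GradedCoalgebraData.isGradedMap_comul (D : GradedCoalgebraData k C 𝒞) :
    IsGradedMap 𝒞 𝒞 𝒞 (Coalgebra.comul (R := k)) := by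
  simpa only [IsGradedMap, D.component_comul] using D.hΔc0

lemma GradedCoalgebraData.Strong.injOn_component_comul {D : GradedCoalgebraData k C 𝒞}
    (hD : D.Strong) (p q : ℕ) :
    Set.InjOn (component 𝒞 𝒞 p q (Coalgebra.comul (R := k))) (𝒞 (p + q)) := by
  simpa only [D.component_comul, Set.injOn_iff_map_eq_zero] using hD p q

variable {X : Type} [AddCommGroup X] [Module k X] {𝒳 : ℕ → Submodule k X}
  [DirectSum.Decomposition 𝒳]

lemma GradedComoduleData.component_ρ (R : GradedComoduleData k C 𝒞 X 𝒳) (p q : ℕ) :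
    component 𝒳 𝒞 p q R.ρ = R.ρc p q :=
  component_eq_of_eq_sum R.hρc R.hρc0 p q

lemma GradedComoduleData.isGradedMap_ρ (R : GradedComoduleData k C 𝒞 X 𝒳) :
    IsGradedMap 𝒳 𝒳 𝒞 R.ρ := by
  simpa only [IsGradedMap, R.component_ρ] using R.hρc0

end Data

/-- **Statement 11.** Let `C` be a connected strongly graded `k`-coalgebra and `(X, ρ)` a
graded right `C`-comodule with `Xᵢ = 0` for all `i < n`.  Then `X` is strongly graded in
degree `n` (all `ρ_{n,q} : X_{n+q} → Xₙ ⊗ C_q` injective) iff `ρ_{i,1} : X_{i+1} → Xᵢ ⊗ C₁`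
is injective for all `i ≥ n`. -/
theorem statement11 [DirectSum.Decomposition 𝒞]
    (D : GradedCoalgebraData k C 𝒞) (hstrong : D.Strong)
    (X : Type) [AddCommGroup X] [Module k X] (𝒳 : ℕ → Submodule k X)
    [DirectSum.Decomposition 𝒳] (R : GradedComoduleData k C 𝒞 X 𝒳)
    (n : ℕ) (hlow : ∀ i : ℕ, i < n → 𝒳 i = ⊥) :
    (∀ q : ℕ, ∀ x ∈ 𝒳 (n + q), R.ρc n q x = 0 → x = 0) ↔
      (∀ i : ℕ, n ≤ i → ∀ x ∈ 𝒳 (i + 1), R.ρc i 1 x = 0 → x = 0) := by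
  simpa only [R.component_ρ, Set.injOn_iff_map_eq_zero] using
    statement11_general (n := n) D.isGradedMap_comul D.counit_eq_zero
      (hstrong.injOn_component_comul · 1) R.isGradedMap_ρ (LinearMap.ext R.coassoc)
      (LinearMap.ext R.counit_law)

end Koszul
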